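/- Let l_1,…,l_n and r_1,…,r_n be d-dimensional bit vectors and let ℓ ≥ 1, p ∈ {0,1}, q ≥ 0 be integers, and let G = G_{L,R,ℓ,p,q}. If the vectors l_i and r_j are orthogonal for some 1 ≤ i ≤ n and 1 ≤ j ≤ n, then dist_G(u_i^L, u_j^R) ≥ 6ℓ − 3p + q. -/

import Mathlib

namespace GraphOV

/-- Two bit vectors (functions into `Fin 2`) are orthogonal if in every coordinate
at least one of them is `0`. -/
def Orth {d : ℕ} (a b : Fin d → Fin 2) : Prop := ∀ k, a k = 0 ∨ b k = 0

/-- A system of internally disjoint paths joining exterior vertices from `E`: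
for each path name `i : ι` we record its two endpoints and its length. -/
structure PathSys (E : Type) (ι : Type) where
  src : ι → E
  dst : ι → E
  len : ι → ℕ

namespace PathSys

variable {E ι : Type}

/-- Endpoints of zero-length paths get identified. -/
def idRel (S : PathSys E ι) (a b : E) : Prop :=
  ∃ i, S.len i = 0 ∧ S.src i = a ∧ S.dst i = b

/-- Vertices of the glued graph: exterior vertices (up to identification) together
with, for each path of length `m`, fresh interior vertices at positions `1,…,m-1`. -/
def Vert (S : PathSys E ι) : Type :=
  Quot S.idRel ⊕ Σ i : ι, {t : ℕ // 0 < t ∧ t < S.len i}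

/-- The vertex corresponding to an exterior vertex. -/
def ext (S : PathSys E ι) (a : E) : S.Vert := Sum.inl (Quot.mk _ a)

/-- The `t`-th vertex on the path named `i` (for `0 ≤ t ≤ S.len i`). -/
def pt (S : PathSys E ι) (i : ι) (t : ℕ) : S.Vert :=
  if h : 0 < t ∧ t < S.len i then Sum.inr ⟨i, t, h⟩
  else if t = 0 then S.ext (S.src i) else S.ext (S.dst i)

/-- The glued graph: consecutive vertices on each path are adjacent. -/
def graph (S : PathSys E ι) : SimpleGraph S.Vert :=
  SimpleGraph.fromRel fun a b =>
    ∃ i t, t + 1 ≤ S.len i ∧ a = S.pt i t ∧ b = S.pt i (t + 1)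

/-- The set of vertices lying on the path named `i`. -/
def onPath (S : PathSys E ι) (i : ι) : Set S.Vert :=
  {v | ∃ t ≤ S.len i, v = S.pt i t}

/-- A walk in the glued graph contains the path named `i` entirely if all vertices of
that path occur consecutively (in forward or backward order) on the walk. -/
def WalkContainsPath (S : PathSys E ι) {x y : S.Vert} (W : S.graph.Walk x y) (i : ι) : Prop :=
  ∃ a, a + S.len i ≤ W.length ∧
    ((∀ t ≤ S.len i, W.getVert (a + t) = S.pt i t) ∨
     (∀ t ≤ S.len i, W.getVert (a + t) = S.pt i (S.len i - t)))

end PathSys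

/-- The exterior vertices of the graph `G_{L,R,ℓ,p,q}`. -/
inductive Ext (n d : ℕ) : Type
  | uL : Fin n → Ext n d
  | uR : Fin n → Ext n d
  | vL : Fin n → Ext n d
  | vR : Fin n → Ext n d
  | wL : Fin d → Ext n d
  | wR : Fin d → Ext n d
  | xL : Ext n d
  | xR : Ext n d
  | yL : Ext n d
  | yR : Ext n d

/-- Names for the paths of the graph `G_{L,R,ℓ,p,q}`. -/
inductive Idx (n d : ℕ) (l r : Fin n → Fin d → Fin 2) : Type
  | uvL : Fin n → Idx n d l r
  | uvR : Fin n → Idx n d l r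
  | vxL : Fin n → Idx n d l r
  | vxR : Fin n → Idx n d l r
  | vwL : (i : Fin n) → (k : Fin d) → l i k = 1 → Idx n d l r
  | vwR : (j : Fin n) → (k : Fin d) → r j k = 1 → Idx n d l r
  | ywL : Fin d → Idx n d l r
  | ywR : Fin d → Idx n d l r
  | ww : Fin d → Idx n d l r
  | xyL : Idx n d l r
  | xyR : Idx n d l r
  | yy : Idx n d l r

/-- The path system defining the graph `G_{L,R,ℓ,p,q}`. -/
def sys (n d : ℕ) (l r : Fin n → Fin d → Fin 2) (ℓ p q : ℕ) :
    PathSys (Ext n d) (Idx n d l r) where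
  src := fun i => match i with
    | .uvL i => .uL i
    | .uvR i => .uR i
    | .vxL i => .vL i
    | .vxR i => .vR i
    | .vwL i _ _ => .vL i
    | .vwR j _ _ => .vR j
    | .ywL _ => .yL
    | .ywR _ => .yR
    | .ww k => .wL k
    | .xyL => .xL
    | .xyR => .xR
    | .yy => .yL
  dst := fun i => match i with
    | .uvL i => .vL i
    | .uvR i => .vR i
    | .vxL _ => .xL
    | .vxR _ => .xR
    | .vwL _ k _ => .wL k
    | .vwR _ k _ => .wR k
    | .ywL k => .wL k
    | .ywR k => .wR k
    | .ww k => .wR k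
    | .xyL => .yL
    | .xyR => .yR
    | .yy => .yR
  len := fun i => match i with
    | .uvL _ => ℓ - p
    | .uvR _ => ℓ - p
    | .vxL _ => ℓ
    | .vxR _ => ℓ
    | .vwL _ _ _ => ℓ
    | .vwR _ _ _ => ℓ
    | .ywL _ => ℓ
    | .ywR _ => ℓ
    | .ww _ => q
    | .xyL => ℓ - p
    | .xyR => ℓ - p
    | .yy => p + q

/-- The set `P_i^L`. -/
def PL (n d : ℕ) (l r : Fin n → Fin d → Fin 2) (ℓ p q : ℕ) (i : Fin n) :
    Set (sys n d l r ℓ p q).Vert :=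
  (sys n d l r ℓ p q).onPath (.uvL i) ∪
    ((sys n d l r ℓ p q).onPath (.vxL i) \ {(sys n d l r ℓ p q).ext .xL}) ∪
    ⋃ (k : Fin d) (h : l i k = 1),
      ((sys n d l r ℓ p q).onPath (.vwL i k h) \ {(sys n d l r ℓ p q).ext (.wL k)})

/-- The set `P_j^R`. -/
def PR (n d : ℕ) (l r : Fin n → Fin d → Fin 2) (ℓ p q : ℕ) (j : Fin n) :
    Set (sys n d l r ℓ p q).Vert :=
  (sys n d l r ℓ p q).onPath (.uvR j) ∪
    ((sys n d l r ℓ p q).onPath (.vxR j) \ {(sys n d l r ℓ p q).ext .xR}) ∪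
    ⋃ (k : Fin d) (h : r j k = 1),
      ((sys n d l r ℓ p q).onPath (.vwR j k h) \ {(sys n d l r ℓ p q).ext (.wR k)})

/-- The set `V^L`. -/
def VL (n d : ℕ) (l r : Fin n → Fin d → Fin 2) (ℓ p q : ℕ) :
    Set (sys n d l r ℓ p q).Vert := ⋃ i : Fin n, PL n d l r ℓ p q i

/-- The set `V^R`. -/
def VR (n d : ℕ) (l r : Fin n → Fin d → Fin 2) (ℓ p q : ℕ) :
    Set (sys n d l r ℓ p q).Vert := ⋃ j : Fin n, PR n d l r ℓ p q j

/-- The set `V^M` of all remaining vertices. -/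
def VM (n d : ℕ) (l r : Fin n → Fin d → Fin 2) (ℓ p q : ℕ) :
    Set (sys n d l r ℓ p q).Vert := (VL n d l r ℓ p q ∪ VR n d l r ℓ p q)ᶜ

namespace PathSys

theorem pt_zero {E ι : Type} (S : PathSys E ι) (i : ι) : S.pt i 0 = S.ext (S.src i) := by
  simp [pt]

theorem ext_eq_of_len_zero {E ι : Type} (S : PathSys E ι) (i : ι) (h : S.len i = 0) :
    S.ext (S.src i) = S.ext (S.dst i) :=
  congrArg Sum.inl (Quot.sound ⟨i, h, rfl, rfl⟩)

theorem pt_len {E ι : Type} (S : PathSys E ι) (i : ι) :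
    S.pt i (S.len i) = S.ext (S.dst i) := by
  by_cases h : S.len i = 0
  · rw [h, pt_zero, ext_eq_of_len_zero S i h]
  · simp [pt, h]

theorem reach_pt {E ι : Type} (S : PathSys E ι) (i : ι) (t : ℕ) (ht : t ≤ S.len i) :
    S.graph.Reachable (S.ext (S.src i)) (S.pt i t) := by
  induction t with
  | zero => rw [pt_zero]
  | succ t ih =>
    refine (ih (by omega)).trans ?_
    by_cases h : S.pt i t = S.pt i (t + 1)
    · rw [h]
    · refine SimpleGraph.Adj.reachable ?_
      rw [graph, SimpleGraph.fromRel_adj]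
      exact ⟨h, Or.inl ⟨i, t, ht, rfl, rfl⟩⟩

theorem reach {E ι : Type} (S : PathSys E ι) (i : ι) :
    S.graph.Reachable (S.ext (S.src i)) (S.ext (S.dst i)) := by
  have := S.reach_pt i _ le_rfl
  rwa [pt_len] at this

/-- Extension of a potential on exterior vertices to the glued graph. -/
def pot {E ι : Type} (S : PathSys E ι) (f : E → ℤ)
    (hf : ∀ i, |f (S.src i) - f (S.dst i)| ≤ (S.len i : ℤ)) : S.Vert → ℤ
  | Sum.inl a => Quot.lift f (by
      rintro a b ⟨i, h, rfl, rfl⟩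
      have := abs_le.1 (hf i)
      omega) a
  | Sum.inr ⟨i, t⟩ => min (f (S.src i) + t.1) (f (S.dst i) + (S.len i - t.1))

theorem pot_pt {E ι : Type} (S : PathSys E ι) (f : E → ℤ)
    (hf : ∀ i, |f (S.src i) - f (S.dst i)| ≤ (S.len i : ℤ)) (i : ι) (t : ℕ)
    (ht : t ≤ S.len i) :
    S.pot f hf (S.pt i t) = min (f (S.src i) + t) (f (S.dst i) + (S.len i - t)) := by
  have h0 := abs_le.1 (hf i)
  by_cases h1 : 0 < t ∧ t < S.len i
  · have : S.pt i t = Sum.inr ⟨i, t, h1⟩ := dif_pos h1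
    rw [this]
    rfl
  · by_cases h2 : t = 0
    · subst h2
      rw [pt_zero]
      change f (S.src i) = _
      push_cast
      omega
    · have h3 : t = S.len i := by omega
      rw [h3, pt_len]
      change f (S.dst i) = _
      omega

theorem pot_adj {E ι : Type} (S : PathSys E ι) (f : E → ℤ)
    (hf : ∀ i, |f (S.src i) - f (S.dst i)| ≤ (S.len i : ℤ)) (a b : S.Vert)
    (h : S.graph.Adj a b) : S.pot f hf b ≤ S.pot f hf a + 1 := by
  rw [graph, SimpleGraph.fromRel_adj] at h
  rcases h with ⟨-, ⟨i, t, ht, rfl, rfl⟩ | ⟨i, t, ht, rfl, rfl⟩⟩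
  all_goals
    rw [pot_pt _ _ _ _ _ ht, pot_pt _ _ _ _ _ (by omega)]
    push_cast
    omega

theorem pot_walk {E ι : Type} (S : PathSys E ι) (f : E → ℤ)
    (hf : ∀ i, |f (S.src i) - f (S.dst i)| ≤ (S.len i : ℤ)) (a b : S.Vert)
    (W : S.graph.Walk a b) : S.pot f hf b ≤ S.pot f hf a + W.length := by
  induction W with
  | nil => simp
  | cons h W ih =>
    have := S.pot_adj f hf _ _ h
    rw [SimpleGraph.Walk.length_cons]
    push_cast
    omega

theorem le_dist {E ι : Type} (S : PathSys E ι) (f : E → ℤ)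
    (hf : ∀ i, |f (S.src i) - f (S.dst i)| ≤ (S.len i : ℤ)) (a b : E)
    (h : S.graph.Reachable (S.ext a) (S.ext b)) :
    f b ≤ f a + S.graph.dist (S.ext a) (S.ext b) := by
  obtain ⟨W, hW⟩ := h.exists_walk_length_eq_dist
  rw [← hW]
  exact S.pot_walk f hf _ _ W

end PathSys

open Classical in
/-- The potential (distance from `u_i^L`, up to slack). -/
noncomputable def phi {n d : ℕ} (l : Fin n → Fin d → Fin 2) (ℓ p q : ℤ) (i j : Fin n) :
    Ext n d → ℤ
  | .uL i' => if i' = i then 0 else 3 * ℓ - p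
  | .vL i' => if i' = i then ℓ - p else 3 * ℓ - p
  | .xL => 2 * ℓ - p
  | .yL => 3 * ℓ - 2 * p
  | .wL k => if l i k = 1 then 2 * ℓ - p else 4 * ℓ - 2 * p
  | .wR k => if l i k = 1 then 2 * ℓ - p + q else 4 * ℓ - 2 * p + q
  | .yR => 3 * ℓ - p + q
  | .xR => 4 * ℓ - 2 * p + q
  | .vR j' => if j' = j then 5 * ℓ - 2 * p + q else 3 * ℓ - p + q
  | .uR j' => if j' = j then 6 * ℓ - 3 * p + q else 3 * ℓ - p + q

theorem dist_u_to_u_orth (n d ℓ p q : ℕ) (hn : 1 ≤ n) (hd : 1 ≤ d) (hℓ : 1 ≤ ℓ)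
    (hp : p ≤ 1) (l r : Fin n → Fin d → Fin 2) (i j : Fin n) (horth : Orth (l i) (r j)) :
    6 * ℓ - 3 * p + q ≤ (sys n d l r ℓ p q).graph.dist
      ((sys n d l r ℓ p q).ext (.uL i)) ((sys n d l r ℓ p q).ext (.uR j)) := by
  have hf : ∀ e, |phi l ℓ p q i j ((sys n d l r ℓ p q).src e)
      - phi l ℓ p q i j ((sys n d l r ℓ p q).dst e)| ≤ ((sys n d l r ℓ p q).len e : ℤ) := by
    intro e
    rw [abs_le]
    cases e with
    | vwL i' k h =>
      simp only [sys, phi]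
      by_cases hi : i' = i
      · subst hi
        simp only [h, if_true]
        omega
      · simp only [hi, if_false]
        split_ifs <;> omega
    | vwR j' k h =>
      simp only [sys, phi]
      by_cases hj : j' = j
      · subst hj
        have : ¬ l i k = 1 := by
          intro h1
          rcases horth k with h0 | h0
          · rw [h0] at h1; exact absurd h1 (by decide)
          · rw [h0] at h; exact absurd h (by decide)
        simp only [this, if_true, if_false]
        omega
      · simp only [hj, if_false]
        split_ifs <;> omega
    | _ => simp only [sys, phi] <;> (try split_ifs) <;> omega
  have hr : (sys n d l r ℓ p q).graph.Reachable
      ((sys n d l r ℓ p q).ext (.uL i)) ((sys n d l r ℓ p q).ext (.uR j)) :=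
    ((sys n d l r ℓ p q).reach (.uvL i)).trans <|
    ((sys n d l r ℓ p q).reach (.vxL i)).trans <|
    ((sys n d l r ℓ p q).reach .xyL).trans <|
    ((sys n d l r ℓ p q).reach .yy).trans <|
    ((sys n d l r ℓ p q).reach .xyR).symm.trans <|
    ((sys n d l r ℓ p q).reach (.vxR j)).symm.trans <|
    ((sys n d l r ℓ p q).reach (.uvR j)).symm
  have := (sys n d l r ℓ p q).le_dist _ hf _ _ hr
  simp only [phi, if_true] at this
  omega

end GraphOV
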